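/- arXiv:2008.06403 — 2 statements merged into one kernel-verified Lean document; each statement's English description precedes it below -/
import Mathlib

section
/- Let p ≥ 5 be a prime, n ≥ 1 and t ≤ 2n natural numbers, and a ∈ (ZMod p)^n an arbitrary vector. Then the cardinality of the set {x ∈ (ZMod p)^n : every entry of x − a lies in {0, 1, −1, 2, −2} and w̃(x − a) ≤ t} equals Ṽ(n,t) = Σ_{i=0}^{t} Σ_{j=max(0,i−n)}^{⌊i/2⌋} C(n,j)·C(n−j, i−2j)·2^{i−j}; in particular this cardinality does not depend on the center a. -/
/-- The restricted weight of a vector over `ZMod p`: the number of entries equal to `±1`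
plus twice the number of entries equal to `±2`. -/
def restrictedWeight {p n : ℕ} (x : Fin n → ZMod p) : ℕ :=
  ∑ i, if x i = 1 ∨ x i = -1 then 1 else if x i = 2 ∨ x i = -2 then 2 else 0

/-- The volume `Ṽ(n,t)` of the restricted ball of radius `t` in dimension `n`. -/
def Vtilde (n t : ℕ) : ℕ :=
  ∑ i ∈ Finset.range (t + 1), ∑ j ∈ Finset.Icc (i - n) (i / 2),
    n.choose j * (n - j).choose (i - 2 * j) * 2 ^ (i - j)

/-!
Translating by `a` moves the center to `0`. The ball is then the disjoint union of spheres, and the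
sphere of weight `i` is counted by the coefficient of `X ^ i` in the product over the coordinates of
the weight enumerator `1 + 2 X + 2 X²` of a single entry. Expanding `((1 + 2 X) + 2 X²) ^ n` twice
by the binomial theorem gives the inner sum of `Vtilde`, with `j` the number of entries `±2`.
-/

open Finset Polynomial

section Coefficients

variable {R : Type*} [CommSemiring R]

lemma coeff_one_add_C_mul_X_pow (a : R) (m k : ℕ) :
    ((1 + C a * X) ^ m).coeff k = m.choose k * a ^ k := by
  have scaled : (1 + C a * X) ^ m = ((1 + X) ^ m).comp (C a * X) := by simp
  rw [scaled, comp_C_mul_X_coeff, coeff_one_add_X_pow]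

lemma coeff_quadratic_pow_summand (a b : R) (n i j : ℕ) :
    ((C b * X ^ 2) ^ j * (1 + C a * X) ^ (n - j) * (n.choose j : R[X])).coeff i =
      if 2 * j ≤ i then
        (n.choose j * (n - j).choose (i - 2 * j) : R) * (a ^ (i - 2 * j) * b ^ j) else 0 := by
  have collect : (C b * X ^ 2) ^ j * (1 + C a * X) ^ (n - j) * (n.choose j : R[X]) =
      C (b ^ j * n.choose j) * ((1 + C a * X) ^ (n - j) * X ^ (2 * j)) := by
    simp only [map_mul, map_pow, map_natCast]
    ring
  rw [collect, coeff_C_mul, coeff_mul_X_pow', coeff_one_add_C_mul_X_pow, mul_ite, mul_zero]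
  congr 1
  ring

theorem coeff_quadratic_pow (a b : R) (n i : ℕ) :
    ((1 + C a * X + C b * X ^ 2) ^ n).coeff i =
      ∑ j ∈ Icc (i - n) (i / 2),
        (n.choose j * (n - j).choose (i - 2 * j) : R) * (a ^ (i - 2 * j) * b ^ j) := by
  set f : ℕ → R := fun j ↦
    (n.choose j * (n - j).choose (i - 2 * j) : R) * (a ^ (i - 2 * j) * b ^ j)
  have f_eq_zero_of_lt {j : ℕ} (h : n < j ∨ n - j < i - 2 * j) : f j = 0 := by
    rcases h with h | h <;> simp [f, Nat.choose_eq_zero_of_lt h]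
  calc ((1 + C a * X + C b * X ^ 2) ^ n).coeff i
      = ∑ j ∈ range (n + 1), if 2 * j ≤ i then f j else 0 := by
        rw [add_comm, add_pow, finsetSum_coeff]
        exact sum_congr rfl fun j _ ↦ coeff_quadratic_pow_summand a b n i j
    _ = ∑ j ∈ range (n + 1) with 2 * j ≤ i, f j := (sum_filter _ _).symm
    _ = ∑ j ∈ {j ∈ range (n + 1) | 2 * j ≤ i} ∩ Icc (i - n) (i / 2), f j := by
        refine (sum_subset inter_subset_left fun j hj hj' ↦ f_eq_zero_of_lt ?_).symm
        simp only [mem_inter, mem_filter, mem_range, mem_Icc] at hj hj'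
        omega
    _ = ∑ j ∈ Icc (i - n) (i / 2), f j := by
        refine sum_subset inter_subset_right fun j hj hj' ↦ f_eq_zero_of_lt ?_
        simp only [mem_inter, mem_filter, mem_range, mem_Icc] at hj hj'
        omega

end Coefficients

theorem card_piFinset_filter_sum_eq_coeff_prod {ι : Type*} [Fintype ι] [DecidableEq ι]
    {κ : ι → Type*} (s : ∀ i, Finset (κ i)) (w : ∀ i, κ i → ℕ) (k : ℕ) :
    #{x ∈ Fintype.piFinset s | ∑ i, w i (x i) = k} =
      (∏ i, ∑ y ∈ s i, (X : ℕ[X]) ^ w i y).coeff k := by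
  simp only [prod_univ_sum, prod_pow_eq_pow_sum, finsetSum_coeff, coeff_X_pow, card_filter,
    eq_comm]

lemma intCast_injOn_Icc_neg {R : Type*} [AddGroupWithOne R] (p : ℕ) [CharP R p] {k : ℕ}
    (hk : 2 * k < p) : Set.InjOn (Int.cast : ℤ → R) (Set.Icc (-k) k) := by
  intro x ⟨hx, hx'⟩ y ⟨hy, hy'⟩ hxy
  have p_dvd : (p : ℤ) ∣ y - x := ((CharP.intCast_eq_intCast R p).1 hxy).dvd
  have abs_lt_p : |y - x| < p := abs_lt.2 (by omega)
  linarith [Int.eq_zero_of_abs_lt_dvd p_dvd abs_lt_p]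

/-- The set of entries allowed in a restricted vector over `ZMod p`. -/
def restrictedAlphabet (p : ℕ) : Finset (ZMod p) := {0, 1, -1, 2, -2}

/-- The contribution of a single entry to the restricted weight. Entries outside
`restrictedAlphabet p` get the junk value `0`, as in `restrictedWeight`. -/
def entryWeight {p : ℕ} (y : ZMod p) : ℕ :=
  if y = 1 ∨ y = -1 then 1 else if y = 2 ∨ y = -2 then 2 else 0

lemma restrictedAlphabet_eq_image_intCast (p : ℕ) :
    restrictedAlphabet p = (Icc (-2) 2 : Finset ℤ).image Int.cast := by
  have Icc_eq : (Icc (-2) 2 : Finset ℤ) = {0, 1, -1, 2, -2} := by decide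
  simp [restrictedAlphabet, Icc_eq, image_insert]

lemma entryWeight_intCast {p : ℕ} (hp : 5 ≤ p) {k : ℤ} (hk : k ∈ Set.Icc (-2) 2) :
    entryWeight (k : ZMod p) = k.natAbs := by
  have cast_eq_iff {m : ℤ} (hm : m ∈ Set.Icc (-2) 2) : (k : ZMod p) = m ↔ k = m :=
    (intCast_injOn_Icc_neg p (k := 2) (by omega)).eq_iff hk hm
  have h₁ := cast_eq_iff (m := 1) (by simp)
  have h₂ := cast_eq_iff (m := -1) (by simp)
  have h₃ := cast_eq_iff (m := 2) (by simp)
  have h₄ := cast_eq_iff (m := -2) (by simp)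
  push_cast at h₁ h₂ h₃ h₄
  obtain ⟨hk₁, hk₂⟩ := hk
  simp only [entryWeight, h₁, h₂, h₃, h₄]
  split_ifs <;> omega

lemma sum_X_pow_entryWeight {p : ℕ} (hp : 5 ≤ p) :
    ∑ y ∈ restrictedAlphabet p, (X : ℕ[X]) ^ entryWeight y = 1 + C 2 * X + C 2 * X ^ 2 := by
  have cast_injOn : Set.InjOn (Int.cast : ℤ → ZMod p) (Icc (-2) 2 : Finset ℤ) := by
    simpa using intCast_injOn_Icc_neg (R := ZMod p) p (k := 2) (by omega)
  calc ∑ y ∈ restrictedAlphabet p, (X : ℕ[X]) ^ entryWeight y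
      = ∑ k ∈ (Icc (-2) 2 : Finset ℤ), X ^ k.natAbs := by
        rw [restrictedAlphabet_eq_image_intCast, sum_image cast_injOn]
        exact sum_congr rfl fun k hk ↦ by rw [entryWeight_intCast hp (mem_Icc.1 hk)]
    _ = X ^ 2 + X ^ 1 + X ^ 0 + X ^ 1 + X ^ 2 := by
        have Icc_eq : (Icc (-2) 2 : Finset ℤ) = {-2, -1, 0, 1, 2} := by decide
        simp [Icc_eq, add_assoc]
    _ = 1 + C 2 * X + C 2 * X ^ 2 := by
        rw [show (C 2 : ℕ[X]) = 2 from rfl]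
        ring

/-- The restricted vectors: those of length `n` over `ZMod p` with all entries in
`restrictedAlphabet p`. -/
def restrictedVectors (p n : ℕ) : Finset (Fin n → ZMod p) :=
  Fintype.piFinset fun _ ↦ restrictedAlphabet p

lemma card_restrictedWeight_eq_coeff {p : ℕ} (hp : 5 ≤ p) (n i : ℕ) :
    #{x ∈ restrictedVectors p n | restrictedWeight x = i} =
      ((1 + C 2 * X + C 2 * X ^ 2 : ℕ[X]) ^ n).coeff i :=
  calc #{x ∈ restrictedVectors p n | restrictedWeight x = i}
      = #{x ∈ Fintype.piFinset fun _ : Fin n ↦ restrictedAlphabet p |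
          ∑ k, entryWeight (x k) = i} := rfl
    _ = (∏ _ : Fin n, ∑ y ∈ restrictedAlphabet p, (X : ℕ[X]) ^ entryWeight y).coeff i :=
        card_piFinset_filter_sum_eq_coeff_prod _ (fun _ ↦ entryWeight) i
    _ = ((1 + C 2 * X + C 2 * X ^ 2 : ℕ[X]) ^ n).coeff i := by
        rw [sum_X_pow_entryWeight hp, prod_const, card_univ, Fintype.card_fin]

theorem card_restrictedWeight_eq {p : ℕ} (hp : 5 ≤ p) (n i : ℕ) :
    #{x ∈ restrictedVectors p n | restrictedWeight x = i} =
      ∑ j ∈ Icc (i - n) (i / 2), n.choose j * (n - j).choose (i - 2 * j) * 2 ^ (i - j) := by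
  rw [card_restrictedWeight_eq_coeff hp, coeff_quadratic_pow]
  refine sum_congr rfl fun j hj ↦ ?_
  have exponent : i - 2 * j + j = i - j := by
    have := (mem_Icc.1 hj).2
    omega
  rw [← pow_add, exponent, Nat.cast_id, Nat.cast_id]

theorem card_restrictedWeight_le {p : ℕ} (hp : 5 ≤ p) (n t : ℕ) :
    #{x ∈ restrictedVectors p n | restrictedWeight x ≤ t} = Vtilde n t := by
  simp only [Vtilde, ← card_restrictedWeight_eq hp, sum_card_fiberwise_eq_card_filter, mem_range,
    Nat.lt_succ_iff]

lemma card_restrictedBall_eq_card_restrictedWeight_le {p n : ℕ} (t : ℕ) (a : Fin n → ZMod p) :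
    Nat.card {x : Fin n → ZMod p |
      (∀ i, (x - a) i ∈ ({0, 1, -1, 2, -2} : Set (ZMod p))) ∧ restrictedWeight (x - a) ≤ t} =
      #{x ∈ restrictedVectors p n | restrictedWeight x ≤ t} := by
  rw [← Nat.card_eq_finsetCard]
  refine Nat.card_congr ((Equiv.subRight a).subtypeEquiv fun x ↦ ?_)
  simp [restrictedVectors, restrictedAlphabet]

theorem stmt2_general {p : ℕ} (hp : 5 ≤ p) (n t : ℕ) (a : Fin n → ZMod p) :
    Nat.card {x : Fin n → ZMod p |
      (∀ i, (x - a) i ∈ ({0, 1, -1, 2, -2} : Set (ZMod p))) ∧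
      restrictedWeight (x - a) ≤ t} = Vtilde n t :=
  (card_restrictedBall_eq_card_restrictedWeight_le t a).trans (card_restrictedWeight_le hp n t)

theorem stmt2 {p : ℕ} [Fact p.Prime] (hp : 5 ≤ p) {n t : ℕ} (hn : 1 ≤ n) (ht : t ≤ 2 * n)
    (a : Fin n → ZMod p) :
    Nat.card {x : Fin n → ZMod p |
      (∀ i, (x - a) i ∈ ({0, 1, -1, 2, -2} : Set (ZMod p))) ∧
      restrictedWeight (x - a) ≤ t} = Vtilde n t :=
  stmt2_general hp n t a
end

section
/- Let q be an odd prime, a a positive integer with a ≤ (q−1)/2, and n, r, v positive integers. Let H be an r×n matrix over ZMod q with columns h_0, …, h_{n−1}, let u = (u_0, …, u_{v−1}) be a vector of nonzero elements of ZMod q, and let H′ be the r×(n·v) matrix whose column with index i·v + j equals u_j · h_i. Assume the covering property: for every nonzero b ∈ ZMod q there exist j ∈ [0, v−1] and an integer y with 1 ≤ y ≤ a such that b = y·u_j or b = −y·u_j (computed in ZMod q). Then for every e ∈ (ZMod q)^n and s ∈ (ZMod q)^r with H·eᵀ = s, there exists e′ ∈ (ZMod q)^{nv} such that every entry of e′ lies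 in {0, ±1, ±2, …, ±a}, wt_H(e′) = wt_H(e), and H′·e′ᵀ = s. -/
/-- The set `{0, ±1, ±2, …, ±a} ⊆ ZMod q`. -/
def restrictedSet (q a : ℕ) : Set (ZMod q) :=
  {x | ∃ y : ℕ, y ≤ a ∧ (x = (y : ZMod q) ∨ x = -(y : ZMod q))}

/-!
Each coordinate `b` of `e` is replaced by a block of length `v` whose dot product with `u` is `b`:
the zero block if `b = 0`, and otherwise the block with a single nonzero entry `c`, in position `j`,
where `b = u j * c` comes from the covering property. Since `b ≠ 0` forces `c ≠ 0`, each block has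
the same weight as the coordinate it replaces, so their concatenation has the weight of `e`.
-/

theorem hammingNorm_eq_sum_ite {ι : Type*} {β : ι → Type*} [Fintype ι] [∀ i, DecidableEq (β i)]
    [∀ i, Zero (β i)] (x : ∀ i, β i) : hammingNorm x = ∑ i, if x i = 0 then 0 else 1 := by
  simp only [hammingNorm, Finset.card_filter, ne_eq, ite_not]

theorem hammingNorm_prod {κ ι : Type*} {β : κ × ι → Type*} [Fintype κ] [Fintype ι]
    [∀ l, DecidableEq (β l)] [∀ l, Zero (β l)] (x : ∀ l, β l) :
    hammingNorm x = ∑ i, hammingNorm fun j => x (i, j) := by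
  simp only [hammingNorm_eq_sum_ite, Fintype.sum_prod_type]

theorem hammingNorm_pi_single {ι : Type*} {β : ι → Type*} [Fintype ι] [DecidableEq ι]
    [∀ i, DecidableEq (β i)] [∀ i, Zero (β i)] (j : ι) (c : β j) :
    hammingNorm (Pi.single j c) = if c = 0 then 0 else 1 := by
  rw [hammingNorm_eq_sum_ite, Finset.sum_eq_single_of_mem j (Finset.mem_univ j), Pi.single_eq_same]
  intro i _ hij
  rw [Pi.single_eq_of_ne hij, if_pos rfl]

section

variable {R ρ κ ι : Type*} [NonUnitalSemiring R] [Fintype κ] [Fintype ι]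

theorem mulVec_eq_mulVec_dotProduct_of_scaled_columns {H : Matrix ρ κ R} {u : ι → R}
    {H' : Matrix ρ (κ × ι) R} (hH' : ∀ row i j, H' row (i, j) = H row i * u j)
    (x : κ × ι → R) : H'.mulVec x = H.mulVec fun i => u ⬝ᵥ fun j => x (i, j) := by
  ext row
  simp only [Matrix.mulVec, dotProduct, Fintype.sum_prod_type, hH', Finset.mul_sum, mul_assoc]

variable [DecidableEq R]

theorem exists_mem_hammingNorm_dotProduct_eq {S : Set R} (hS : 0 ∈ S) {u : ι → R}
    (hcov : ∀ b ≠ 0, ∃ j, ∃ c ∈ S, b = u j * c) (b : R) :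
    ∃ w : ι → R, (∀ j, w j ∈ S) ∧ hammingNorm w = (if b = 0 then 0 else 1) ∧ u ⬝ᵥ w = b := by
  classical
  rcases eq_or_ne b 0 with rfl | hb
  · exact ⟨0, fun _ => hS, by rw [hammingNorm_zero, if_pos rfl], dotProduct_zero u⟩
  · obtain ⟨j, c, hc, rfl⟩ := hcov b hb
    refine ⟨Pi.single j c, fun i => ?_, ?_, dotProduct_single u c j⟩
    · obtain rfl | hij := eq_or_ne i j
      · rwa [Pi.single_eq_same]
      · rwa [Pi.single_eq_of_ne hij]
    · rw [hammingNorm_pi_single, if_neg (right_ne_zero_of_mul hb), if_neg hb]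

theorem stmt8_general {S : Set R} (hS : 0 ∈ S) (H : Matrix ρ κ R) (u : ι → R)
    (H' : Matrix ρ (κ × ι) R) (hH' : ∀ row i j, H' row (i, j) = H row i * u j)
    (hcov : ∀ b ≠ 0, ∃ j, ∃ c ∈ S, b = u j * c) (e : κ → R) :
    ∃ e' : κ × ι → R,
      (∀ l, e' l ∈ S) ∧ hammingNorm e' = hammingNorm e ∧ H'.mulVec e' = H.mulVec e := by
  choose w hwS hw_norm hw_dot using exists_mem_hammingNorm_dotProduct_eq hS hcov
  refine ⟨fun l => w (e l.1) l.2, fun l => hwS _ _, ?_, ?_⟩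
  · simp only [hammingNorm_prod, hw_norm, ← hammingNorm_eq_sum_ite]
  · simp only [mulVec_eq_mulVec_dotProduct_of_scaled_columns hH', hw_dot]

end

theorem zero_mem_restrictedSet (q a : ℕ) : 0 ∈ restrictedSet q a :=
  ⟨0, a.zero_le, .inl Nat.cast_zero.symm⟩

theorem exists_mem_restrictedSet_eq_mul {q a y : ℕ} (hy : y ≤ a) {b t : ZMod q}
    (hb : b = y * t ∨ b = -(y * t)) : ∃ c ∈ restrictedSet q a, b = t * c := by
  rcases hb with rfl | rfl
  · exact ⟨y, ⟨y, hy, .inl rfl⟩, mul_comm _ _⟩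
  · exact ⟨-y, ⟨y, hy, .inr rfl⟩, by ring⟩

theorem stmt8 {q : ℕ} [Fact q.Prime] (hodd : Odd q) {a : ℕ} (ha : 1 ≤ a)
    (ha' : a ≤ (q - 1) / 2) {n r v : ℕ} (hn : 0 < n) (hr : 0 < r) (hv : 0 < v)
    (H : Matrix (Fin r) (Fin n) (ZMod q)) (u : Fin v → ZMod q) (hu : ∀ j, u j ≠ 0)
    (H' : Matrix (Fin r) (Fin n × Fin v) (ZMod q))
    (hH' : ∀ (row : Fin r) (i : Fin n) (j : Fin v), H' row (i, j) = u j * H row i)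
    (hcov : ∀ b : ZMod q, b ≠ 0 → ∃ (j : Fin v) (y : ℕ), 1 ≤ y ∧ y ≤ a ∧
      (b = (y : ZMod q) * u j ∨ b = -((y : ZMod q) * u j))) :
    ∀ (e : Fin n → ZMod q) (s : Fin r → ZMod q), H.mulVec e = s →
      ∃ e' : Fin n × Fin v → ZMod q,
        (∀ l, e' l ∈ restrictedSet q a) ∧
        hammingNorm e' = hammingNorm e ∧
        H'.mulVec e' = s := by
  rintro e _ rfl
  exact stmt8_general (zero_mem_restrictedSet q a) H u H'
    (fun row i j => (hH' row i j).trans (mul_comm _ _))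
    (fun b hb => let ⟨j, _, _, hy, hby⟩ := hcov b hb
      ⟨j, exists_mem_restrictedSet_eq_mul hy hby⟩) e
end
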